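/- Let T ⊆ ℂ be the set of complex numbers λ with λ^8 = 1 and λ ≠ 1 (the seven nontrivial 8th roots of unity). Then (1/8) · Σ_{λ ∈ T} λ(1+λ)(1-λ)/(1-λ)^3 = -7/8, and (1/8) · Σ_{λ ∈ T} λ(1+λ)(1-λ^3)/(1-λ)^3 = -5/8. -/

import Mathlib

lemma eta_set (w : ℂ) (hw : IsPrimitiveRoot w 8) (f : ℂ → ℂ) :
    ∑ᶠ z ∈ {z : ℂ | z ^ 8 = 1 ∧ z ≠ 1}, f z
      = f w + f (w ^ 2) + f (w ^ 3) + f (w ^ 4) + f (w ^ 5) + f (w ^ 6) + f (w ^ 7) := by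
  have hs : {z : ℂ | z ^ 8 = 1 ∧ z ≠ 1} = Set.image (fun k : ℕ => w ^ k) (↑(Finset.Icc 1 7) : Set ℕ) := by
    ext z
    simp only [Set.mem_ofPred_eq, Set.mem_image, Finset.coe_Icc, Set.mem_Icc]
    constructor
    · rintro ⟨h8, h1⟩
      obtain ⟨i, hi, rfl⟩ := hw.eq_pow_of_pow_eq_one h8
      refine ⟨i, ⟨?_, by omega⟩, rfl⟩
      rcases Nat.eq_zero_or_pos i with h | h
      · subst h; simp at h1
      · exact h
    · rintro ⟨k, ⟨hk1, hk7⟩, rfl⟩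
      refine ⟨by rw [← pow_mul, mul_comm, pow_mul, hw.pow_eq_one, one_pow], ?_⟩
      exact hw.pow_ne_one_of_pos_of_lt (by omega) (by omega)
  rw [hs, finsum_mem_image, finsum_mem_coe_finset]
  · simp [Finset.sum_Icc_succ_top]
  · intro a ha b hb hab
    simp only [Finset.coe_Icc, Set.mem_Icc] at ha hb
    exact hw.pow_inj (by omega) (by omega) hab

lemma eta_phi (z : ℂ) (h : z ^ 8 = 1 ∧ z ≠ 1) :
    1 + z + z ^ 2 + z ^ 3 + z ^ 4 + z ^ 5 + z ^ 6 + z ^ 7 = 0 := by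
  have h1 : z - 1 ≠ 0 := sub_ne_zero.mpr h.2
  apply mul_left_cancel₀ h1
  linear_combination h.1

lemma eta_term1 (z : ℂ) (h : z ^ 8 = 1 ∧ z ≠ 1) :
    z * (1 + z) * (1 - z) / (1 - z) ^ 3 = (-3/4) * z ^ 0 + (-3/4) * z ^ 1 + (1/2) * z ^ 3 + (3/4) * z ^ 4 + (3/4) * z ^ 5 + (1/2) * z ^ 6 := by
  have h1 : (1 - z) ^ 3 ≠ 0 := pow_ne_zero _ (sub_ne_zero.mpr h.2.symm)
  rw [div_eq_iff h1]
  linear_combination ((3/4) * z ^ 0 + (-5/4) * z ^ 1 + (1/2) * z ^ 2) * eta_phi z h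

lemma eta_term2 (z : ℂ) (h : z ^ 8 = 1 ∧ z ≠ 1) :
    z * (1 + z) * (1 - z ^ 3) / (1 - z) ^ 3 = (-3/2) * z ^ 0 + (-11/4) * z ^ 1 + (-11/4) * z ^ 2 + (-3/2) * z ^ 3 + (3/4) * z ^ 5 + (3/4) * z ^ 6 := by
  have h1 : (1 - z) ^ 3 ≠ 0 := pow_ne_zero _ (sub_ne_zero.mpr h.2.symm)
  rw [div_eq_iff h1]
  linear_combination ((3/2) * z ^ 0 + (-9/4) * z ^ 1 + (3/4) * z ^ 2) * eta_phi z h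

/-- Eta-invariant computations for the 5-dimensional lens space bundle `L⁵(1,1)`:
summing over the seven nontrivial 8th roots of unity,
`(1/8)·Σ λ(1+λ)(1-λ)/(1-λ)³ = -7/8` and `(1/8)·Σ λ(1+λ)(1-λ³)/(1-λ)³ = -5/8`. -/
theorem eta_L5_sums :
    (1 / 8 : ℂ) * ∑ᶠ z ∈ {z : ℂ | z ^ 8 = 1 ∧ z ≠ 1},
        z * (1 + z) * (1 - z) / (1 - z) ^ 3 = -7 / 8 ∧
    (1 / 8 : ℂ) * ∑ᶠ z ∈ {z : ℂ | z ^ 8 = 1 ∧ z ≠ 1},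
        z * (1 + z) * (1 - z ^ 3) / (1 - z) ^ 3 = -5 / 8 := by
  obtain ⟨w, hw⟩ : ∃ w : ℂ, IsPrimitiveRoot w 8 :=
    ⟨_, Complex.isPrimitiveRoot_exp 8 (by norm_num)⟩
  have h4 : w ^ 4 = -1 := by
    have h : w ^ 4 ≠ 1 := hw.pow_ne_one_of_pos_of_lt (by omega) (by omega)
    have hb : (w ^ 4 - 1) * (w ^ 4 + 1) = 0 := by linear_combination hw.pow_eq_one
    rcases mul_eq_zero.mp hb with hc | hc
    · exact absurd (sub_eq_zero.mp hc) h
    · linear_combination hc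
  constructor
  · rw [finsum_mem_congr (s := {z : ℂ | z ^ 8 = 1 ∧ z ≠ 1}) rfl (fun z hz => eta_term1 z hz), eta_set w hw]
    linear_combination (1 / 8) * ((7/4) * w ^ 0 + (-3/4) * w ^ 1 + (-3/4) * w ^ 2 + (-1/4) * w ^ 3 + (-7/4) * w ^ 4 + (3/4) * w ^ 5 + (1) * w ^ 6 + (-1/2) * w ^ 7 + (5/2) * w ^ 8 + (-1/4) * w ^ 9 + (-1/4) * w ^ 10 + (1/2) * w ^ 11 + (-3/4) * w ^ 12 + (1/4) * w ^ 13 + (1/4) * w ^ 14 + (3/4) * w ^ 15 + (3/2) * w ^ 16 + (-1/4) * w ^ 17 + (3/4) * w ^ 18 + (-3/4) * w ^ 19 + (3/4) * w ^ 21 + (-3/4) * w ^ 22 + (3/4) * w ^ 23 + (5/4) * w ^ 24 + (3/4) * w ^ 26 + (-3/4) * w ^ 27 + (-1/2) * w ^ 28 + (1/2) * w ^ 30 + (3/4) * w ^ 31 + (1/2) * w ^ 32 + (-1/2) * w ^ 34 + (1/2) * w ^ 38) * h4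
  · rw [finsum_mem_congr (s := {z : ℂ | z ^ 8 = 1 ∧ z ≠ 1}) rfl (fun z hz => eta_term2 z hz), eta_set w hw]
    linear_combination (1 / 8) * ((-11/2) * w ^ 0 + (-11/4) * w ^ 1 + (-11/2) * w ^ 2 + (-17/4) * w ^ 3 + (3/4) * w ^ 5 + (-3/4) * w ^ 6 + (3/2) * w ^ 7 + (-11/4) * w ^ 8 + (-9/4) * w ^ 9 + (-5/4) * w ^ 10 + (-3/2) * w ^ 11 + (-3/4) * w ^ 12 + (9/4) * w ^ 13 + (-3/2) * w ^ 14 + (3/4) * w ^ 15 + (3/4) * w ^ 16 + (-9/4) * w ^ 17 + (3/4) * w ^ 18 + (-3/4) * w ^ 19 + (3/4) * w ^ 21 + (-3/4) * w ^ 22 + (3/4) * w ^ 23 + (3/4) * w ^ 24 + (3/4) * w ^ 26 + (-3/4) * w ^ 27 + (-3/4) * w ^ 28 + (3/4) * w ^ 30 + (3/4) * w ^ 31 + (3/4) * w ^ 32 + (-3/4) * w ^ 34 + (3/4) * w ^ 38) * h4
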